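/- For all natural numbers k and l and all x, z ∈ F: (-1)^l Σ_{j=0}^{l} [l choose j]_q x^{l-j} (A*_{k+j+1}(z)/[k+j+1]_q) q^{-kj - k(k+1)/2} + (-1)^k Σ_{j=0}^{k} [k choose j]_q x^{k-j} (A_{l+j+1}([1,-z,-x])/[l+j+1]_q) q^{j(j+1)/2 - k(l+j+1)} = a_0 (-x)^{k+l+1} / ([k+l+1]_q · [k+l choose k]_q). -/

import Mathlib

open Finset

/-- The q-Pochhammer symbol `(a;q)_n = ∏_{j=0}^{n-1} (1 - a q^j)`. -/
def qPoch {F : Type*} [Field F] (q a : F) (n : ℕ) : F :=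
  ∏ j ∈ Finset.range n, (1 - a * q ^ j)

/-- The q-binomial coefficient `[n choose i]_q`, equal to 0 when `i > n`. -/
def qBinom {F : Type*} [Field F] (q : F) (n i : ℕ) : F :=
  if i ≤ n then qPoch q q n / (qPoch q q i * qPoch q q (n - i)) else 0

/-- The q-integer `[n]_q = (1-q^n)/(1-q)`. -/
def qInt {F : Type*} [Field F] (q : F) (n : ℕ) : F := (1 - q ^ n) / (1 - q)

/-- The q-dual sequence `a*_n = ∑_{i=0}^n (-1)^i [n choose i]_q q^{i(i-1)/2} a_i`. -/
def qDual {F : Type*} [Field F] (q : F) (a : ℕ → F) (n : ℕ) : F :=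
  ∑ i ∈ Finset.range (n + 1), (-1 : F) ^ i * qBinom q n i * q ^ (i.choose 2) * a i
/-- The q-factorial `[n]_q! = ∏_{j=1}^n [j]_q`. -/
def qFact {F : Type*} [Field F] (q : F) (n : ℕ) : F :=
  ∏ j ∈ Finset.range n, qInt q (j + 1)

/-- `[u,v,w]^n = ∑_{i+j+k=n} ([n]_q!/([i]_q![j]_q![k]_q!)) u^i v^j w^k`. -/
def qBracket3 {F : Type*} [Field F] (q : F) (n : ℕ) (u v w : F) : F :=
  ∑ i ∈ Finset.range (n + 1), ∑ j ∈ Finset.range (n + 1 - i),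
    qFact q n / (qFact q i * qFact q j * qFact q (n - i - j)) *
      (u ^ i * v ^ j * w ^ (n - i - j))

/-- `A_n(x) = ∑_{i=0}^n (-1)^i [n choose i]_q q^{i(i-1)/2} a_i x^{n-i}`. -/
def Apoly {F : Type*} [Field F] (q : F) (a : ℕ → F) (n : ℕ) (x : F) : F :=
  ∑ i ∈ Finset.range (n + 1), (-1 : F) ^ i * qBinom q n i * q ^ (i.choose 2) * a i * x ^ (n - i)

/-- `A*_n(x) = ∑_{i=0}^n (-1)^i [n choose i]_q a*_i x^{n-i}`. -/
def AstarPoly {F : Type*} [Field F] (q : F) (a : ℕ → F) (n : ℕ) (x : F) : F :=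
  ∑ i ∈ Finset.range (n + 1), (-1 : F) ^ i * qBinom q n i * qDual q a i * x ^ (n - i)

/-- `A_n([1,-z,-x]) = ∑_{i=0}^n (-1)^i [n choose i]_q q^{i(i-1)/2} a_i [1,-z,-x]^{n-i}`. -/
def ApolyTri {F : Type*} [Field F] (q : F) (a : ℕ → F) (n : ℕ) (z x : F) : F :=
  ∑ i ∈ Finset.range (n + 1), (-1 : F) ^ i * qBinom q n i * q ^ (i.choose 2) * a i *
    qBracket3 q (n - i) 1 (-z) (-x)

/-!
Write `b ⋆ c` for the `q`-binomial convolution `n ↦ ∑ [n choose i]_q b_i c_{n-i}`; it is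
associative, being the product of `q`-exponential generating functions. With
`ã_i = (-1)^i q^{i(i-1)/2} a_i`, the sequence `(-1)^n A*_n(z)` is `(ã ⋆ 1) ⋆ (-z)^•`, while
`A_n([1,-z,-x])` is `ã ⋆ (1 ⋆ ((-z)^• ⋆ (-x)^•))`, so the latter is the former `⋆ (-x)^•`.

Each of the two sums, as well as `(-x)^{k+l+1}` times the `q`-beta value
`[k]_q! [l]_q! / [k+l+1]_q!`, solves the recurrence `T(k, l+1) + q^{l+1} T(k+1, l) = -x T(k, l)`, by
the two `q`-Pascal rules and by `[k+l+2]_q = [l+1]_q + q^{l+1} [k+1]_q`. A solution is determined by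
its values at `k = 0`, where the claim is the convolution identity divided by `[l+1]_q`.
-/

section QCalculus

variable {F : Type*} [Field F] {q : F}

lemma ne_one_of_not_isOfFinOrder (hq : ¬IsOfFinOrder q) : q ≠ 1 :=
  fun h => hq (h ▸ IsOfFinOrder.one)

lemma qInt_ne_zero (hq : ¬IsOfFinOrder q) {n : ℕ} (hn : 0 < n) : qInt q n ≠ 0 := by
  have hpow : q ^ n ≠ 1 := fun h => hq (isOfFinOrder_iff_pow_eq_one.2 ⟨n, hn, h⟩)
  exact div_ne_zero (sub_ne_zero.2 hpow.symm)
    (sub_ne_zero.2 (ne_one_of_not_isOfFinOrder hq).symm)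

lemma qInt_add (m n : ℕ) : qInt q (m + n) = qInt q m + q ^ m * qInt q n := by
  unfold qInt
  ring

lemma qFact_ne_zero (hq : ¬IsOfFinOrder q) (n : ℕ) : qFact q n ≠ 0 :=
  prod_ne_zero_iff.2 fun j _ => qInt_ne_zero hq j.succ_pos

lemma qFact_zero : qFact q 0 = 1 := prod_range_zero _

lemma qFact_succ (n : ℕ) : qFact q (n + 1) = qFact q n * qInt q (n + 1) := prod_range_succ _ _

lemma qPoch_self (hq : q ≠ 1) (n : ℕ) : qPoch q q n = (1 - q) ^ n * qFact q n := by
  rw [qPoch, qFact, pow_eq_prod_const, ← prod_mul_distrib]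
  refine prod_congr rfl fun j _ => ?_
  rw [qInt, mul_div_cancel₀ _ (sub_ne_zero.2 hq.symm), pow_succ']

lemma qBinom_of_lt {n i : ℕ} (h : n < i) : qBinom q n i = 0 := if_neg h.not_ge

lemma qBinom_zero_zero : qBinom q 0 0 = 1 := by
  simp [qBinom, qPoch]

lemma qBinom_symm {n i : ℕ} (hi : i ≤ n) : qBinom q n (n - i) = qBinom q n i := by
  rw [qBinom, qBinom, if_pos (n.sub_le i), if_pos hi, Nat.sub_sub_self hi, mul_comm]

lemma qBinom_eq_qFact_div (hq : q ≠ 1) {n i : ℕ} (hi : i ≤ n) :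
    qBinom q n i = qFact q n / (qFact q i * qFact q (n - i)) := by
  have hpow : (1 - q) ^ i * (1 - q) ^ (n - i) = (1 - q) ^ n := by
    rw [← pow_add, Nat.add_sub_cancel' hi]
  rw [qBinom, if_pos hi, qPoch_self hq, qPoch_self hq, qPoch_self hq, mul_mul_mul_comm, hpow,
    mul_div_mul_left _ _ (pow_ne_zero _ (sub_ne_zero.2 hq.symm))]

lemma qBinom_add_left (hq : q ≠ 1) (m n : ℕ) :
    qBinom q (m + n) m = qFact q (m + n) / (qFact q m * qFact q n) := by
  rw [qBinom_eq_qFact_div hq (m.le_add_right n), Nat.add_sub_cancel_left]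

lemma qBinom_self (hq : ¬IsOfFinOrder q) (n : ℕ) : qBinom q n n = 1 := by
  rw [qBinom_eq_qFact_div (ne_one_of_not_isOfFinOrder hq) le_rfl, Nat.sub_self, qFact_zero,
    mul_one, div_self (qFact_ne_zero hq n)]

lemma qBinom_zero_right (hq : ¬IsOfFinOrder q) (n : ℕ) : qBinom q n 0 = 1 := by
  rw [← qBinom_symm n.zero_le, Nat.sub_zero, qBinom_self hq]

lemma qBinom_succ_succ (hq : ¬IsOfFinOrder q) {n j : ℕ} (hj : j ≤ n) :
    qBinom q (n + 1) (j + 1) = qBinom q n (j + 1) + q ^ (n - j) * qBinom q n j := by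
  obtain rfl | hlt := hj.eq_or_lt
  · simp [qBinom_self hq, qBinom_of_lt]
  obtain ⟨m, rfl⟩ := Nat.exists_eq_add_of_lt hlt
  have hq1 := ne_one_of_not_isOfFinOrder hq
  have hadd : qInt q (j + m + 1 + 1) = qInt q (m + 1) + q ^ (m + 1) * qInt q (j + 1) := by
    rw [← qInt_add]
    congr 1
    ring
  rw [qBinom_eq_qFact_div hq1 (by lia), qBinom_eq_qFact_div hq1 (by lia),
    qBinom_eq_qFact_div hq1 (by lia), show j + m + 1 + 1 - (j + 1) = m + 1 by lia,
    show j + m + 1 - (j + 1) = m by lia, show j + m + 1 - j = m + 1 by lia,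
    qFact_succ (j + m + 1), qFact_succ j, qFact_succ m, hadd]
  have := qFact_ne_zero hq j
  have := qFact_ne_zero hq m
  have := qInt_ne_zero hq j.succ_pos
  have := qInt_ne_zero hq m.succ_pos
  field_simp

lemma qBinom_succ_succ' (hq : ¬IsOfFinOrder q) {n j : ℕ} (hj : j ≤ n) :
    qBinom q (n + 1) (j + 1) = q ^ (j + 1) * qBinom q n (j + 1) + qBinom q n j := by
  obtain rfl | hlt := hj.eq_or_lt
  · simp [qBinom_self hq, qBinom_of_lt]
  have hpascal := qBinom_succ_succ hq (n.sub_le (j + 1))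
  rwa [show n - (j + 1) + 1 = n - j by lia, Nat.sub_sub_self hlt, qBinom_symm hj, qBinom_symm hlt,
    ← Nat.add_sub_add_right n 1 j, qBinom_symm (Nat.succ_le_succ hj), add_comm] at hpascal

lemma sum_qBinom_succ_of_pascal (hq : ¬IsOfFinOrder q) {n : ℕ} {α β : ℕ → F} (hα : α 0 = 1)
    (hpascal : ∀ j ≤ n,
      qBinom q (n + 1) (j + 1) = α (j + 1) * qBinom q n (j + 1) + β j * qBinom q n j)
    (f : ℕ → F) :
    ∑ j ∈ range (n + 2), qBinom q (n + 1) j * f j =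
      ∑ j ∈ range (n + 1), qBinom q n j * (α j * f j) +
        ∑ j ∈ range (n + 1), qBinom q n j * (β j * f (j + 1)) := by
  have hextend : ∑ j ∈ range (n + 1), qBinom q n j * (α j * f j) =
      ∑ j ∈ range (n + 2), qBinom q n j * (α j * f j) := by
    rw [sum_range_succ _ (n + 1), qBinom_of_lt n.lt_succ_self, zero_mul, add_zero]
  rw [hextend, sum_range_succ' _ (n + 1), sum_range_succ' _ (n + 1), qBinom_zero_right hq,
    qBinom_zero_right hq, hα, one_mul, one_mul, add_right_comm, ← sum_add_distrib]
  congr 1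
  refine sum_congr rfl fun j hj => ?_
  rw [hpascal j (mem_range_succ_iff.1 hj)]
  ring

lemma sum_qBinom_succ (hq : ¬IsOfFinOrder q) (n : ℕ) (f : ℕ → F) :
    ∑ j ∈ range (n + 2), qBinom q (n + 1) j * f j =
      ∑ j ∈ range (n + 1), qBinom q n j * f j +
        ∑ j ∈ range (n + 1), qBinom q n j * (q ^ (n - j) * f (j + 1)) := by
  simpa only [one_mul] using sum_qBinom_succ_of_pascal hq (α := fun _ => 1) rfl
    (fun j hj => by rw [one_mul, qBinom_succ_succ hq hj]) f

lemma sum_qBinom_succ' (hq : ¬IsOfFinOrder q) (n : ℕ) (f : ℕ → F) :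
    ∑ j ∈ range (n + 2), qBinom q (n + 1) j * f j =
      ∑ j ∈ range (n + 1), qBinom q n j * (q ^ j * f j) +
        ∑ j ∈ range (n + 1), qBinom q n j * f (j + 1) := by
  simpa only [one_mul] using sum_qBinom_succ_of_pascal hq (β := fun _ => 1) (pow_zero q)
    (fun j hj => by rw [one_mul, qBinom_succ_succ' hq hj]) f

lemma qBinom_succ_succ_div_qInt (hq : ¬IsOfFinOrder q) {n j : ℕ} (hj : j ≤ n) :
    qBinom q (n + 1) (j + 1) / qInt q (n + 1) = qBinom q n j / qInt q (j + 1) := by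
  have hq1 := ne_one_of_not_isOfFinOrder hq
  rw [qBinom_eq_qFact_div hq1 hj, qBinom_eq_qFact_div hq1 (Nat.add_le_add_right hj 1),
    Nat.add_sub_add_right, qFact_succ, qFact_succ]
  have := qFact_ne_zero hq j
  have := qFact_ne_zero hq (n - j)
  have := qInt_ne_zero hq j.succ_pos
  have := qInt_ne_zero hq n.succ_pos
  field_simp

/-- The value `B_q(k+1, l+1) = [k]_q! [l]_q! / [k+l+1]_q!` of the `q`-beta function. The arguments
are shifted by one, so that every pair of natural numbers is meaningful. -/
def qBeta (q : F) (k l : ℕ) : F := qFact q k * qFact q l / qFact q (k + l + 1)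

lemma qBeta_eq_inv (hq : ¬IsOfFinOrder q) (k l : ℕ) :
    qBeta q k l = (qInt q (k + l + 1) * qBinom q (k + l) k)⁻¹ := by
  rw [qBeta, qBinom_add_left (ne_one_of_not_isOfFinOrder hq), qFact_succ]
  have := qFact_ne_zero hq (k + l)
  field_simp

lemma qBeta_zero_left (hq : ¬IsOfFinOrder q) (l : ℕ) : qBeta q 0 l = (qInt q (l + 1))⁻¹ := by
  rw [qBeta_eq_inv hq, qBinom_zero_right hq, mul_one, zero_add]

lemma qBeta_succ_add_succ (hq : ¬IsOfFinOrder q) (k l : ℕ) :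
    qBeta q k (l + 1) + q ^ (l + 1) * qBeta q (k + 1) l = qBeta q k l := by
  have hadd : qInt q (k + l + 1 + 1) = qInt q (l + 1) + q ^ (l + 1) * qInt q (k + 1) := by
    rw [← qInt_add]
    congr 1
    ring
  unfold qBeta
  rw [← add_assoc k, add_right_comm k 1, qFact_succ (k + l + 1), qFact_succ k, qFact_succ l]
  have := qFact_ne_zero hq (k + l + 1)
  have := qInt_ne_zero hq (k + l + 1).succ_pos
  field_simp
  rw [hadd]

/-- The `q`-binomial convolution of two sequences, that is, the product of their `q`-exponential
generating functions. -/
def qConv (q : F) (b c : ℕ → F) (n : ℕ) : F :=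
  ∑ i ∈ range (n + 1), qBinom q n i * b i * c (n - i)

/-- The `q`-exponential generating function `∑ b_n t^n / [n]_q!`. -/
def qExpGen (q : F) (b : ℕ → F) : PowerSeries F :=
  PowerSeries.mk fun n => b n / qFact q n

lemma qExpGen_injective (hq : ¬IsOfFinOrder q) : Function.Injective (qExpGen q) := by
  intro b c h
  funext n
  have hn := congrArg (PowerSeries.coeff n) h
  simpa only [qExpGen, PowerSeries.coeff_mk, div_left_inj' (qFact_ne_zero hq n)] using hn

lemma qExpGen_qConv (hq : ¬IsOfFinOrder q) (b c : ℕ → F) :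
    qExpGen q (qConv q b c) = qExpGen q b * qExpGen q c := by
  ext n
  simp only [qExpGen, qConv, PowerSeries.coeff_mul, PowerSeries.coeff_mk,
    Nat.sum_antidiagonal_eq_sum_range_succ_mk, sum_div]
  refine sum_congr rfl fun i hi => ?_
  rw [qBinom_eq_qFact_div (ne_one_of_not_isOfFinOrder hq) (mem_range_succ_iff.1 hi)]
  have := qFact_ne_zero hq n
  field_simp

lemma qConv_assoc (hq : ¬IsOfFinOrder q) (b c d : ℕ → F) :
    qConv q (qConv q b c) d = qConv q b (qConv q c d) :=
  qExpGen_injective hq <| by simp only [qExpGen_qConv hq, mul_assoc]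

lemma qBracket3_eq_qConv (hq : ¬IsOfFinOrder q) (u v w : F) :
    (qBracket3 q · u v w) = qConv q (u ^ ·) (qConv q (v ^ ·) (w ^ ·)) := by
  funext n
  refine sum_congr rfl fun i hi => ?_
  have hin := mem_range_succ_iff.1 hi
  rw [qConv, mul_sum, Nat.sub_add_comm hin]
  refine sum_congr rfl fun j hj => ?_
  have hq1 := ne_one_of_not_isOfFinOrder hq
  rw [qBinom_eq_qFact_div hq1 hin, qBinom_eq_qFact_div hq1 (mem_range_succ_iff.1 hj)]
  have := qFact_ne_zero hq (n - i)
  field_simp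

/-- The sequence `(-1)^i q^{i(i-1)/2} a_i` from which both the dual sequence `a*` and the
polynomials `A_n` arise by `q`-binomial convolution. -/
def qTwist (q : F) (a : ℕ → F) (i : ℕ) : F := (-1) ^ i * q ^ (i.choose 2) * a i

lemma qDual_eq_qConv (a : ℕ → F) : qDual q a = qConv q (qTwist q a) 1 := by
  funext n
  refine sum_congr rfl fun i _ => ?_
  rw [qTwist, Pi.one_apply]
  ring

lemma ApolyTri_eq_qConv (a : ℕ → F) (z x : F) :
    (ApolyTri q a · z x) = qConv q (qTwist q a) (qBracket3 q · 1 (-z) (-x)) := by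
  funext n
  refine sum_congr rfl fun i _ => ?_
  rw [qTwist]
  ring

lemma neg_one_pow_mul_AstarPoly_eq_qConv (a : ℕ → F) (z : F) :
    (fun n => (-1) ^ n * AstarPoly q a n z) = qConv q (qDual q a) ((-z) ^ ·) := by
  funext n
  rw [AstarPoly, mul_sum]
  refine sum_congr rfl fun i hi => ?_
  beta_reduce
  have hsign : (-1 : F) ^ n * (-1) ^ i = (-1) ^ (n - i) := by
    rw [← pow_sub_mul_pow (-1 : F) (mem_range_succ_iff.1 hi), mul_assoc, ← mul_pow, neg_one_mul,
      neg_neg, one_pow, mul_one]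
  rw [neg_pow z, ← hsign]
  ring

lemma ApolyTri_eq_qConv_AstarPoly (hq : ¬IsOfFinOrder q) (a : ℕ → F) (z x : F) :
    (ApolyTri q a · z x) = qConv q (fun n => (-1) ^ n * AstarPoly q a n z) ((-x) ^ ·) := by
  have hone : ((1 : F) ^ ·) = (1 : ℕ → F) := funext fun n => one_pow n
  rw [ApolyTri_eq_qConv, qBracket3_eq_qConv hq, neg_one_pow_mul_AstarPoly_eq_qConv,
    qDual_eq_qConv, qConv_assoc hq, qConv_assoc hq, hone]

lemma AstarPoly_zero (a : ℕ → F) (z : F) : AstarPoly q a 0 z = a 0 := by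
  simp [AstarPoly, qDual, qBinom_zero_zero]

/-- The two-index recurrence `T(k, l+1) + q^{l+1} T(k+1, l) = y T(k, l)`, which for `y = 1` is
that of the `q`-beta function. -/
def BetaRecurrence (q y : F) (T : ℕ → ℕ → F) : Prop :=
  ∀ k l, T k (l + 1) + q ^ (l + 1) * T (k + 1) l = y * T k l

namespace BetaRecurrence

variable {y : F} {S T : ℕ → ℕ → F}

lemma add (hS : BetaRecurrence q y S) (hT : BetaRecurrence q y T) :
    BetaRecurrence q y fun k l => S k l + T k l :=
  fun k l => by linear_combination hS k l + hT k l

lemma eq_of_zero (hq0 : q ≠ 0) (hS : BetaRecurrence q y S) (hT : BetaRecurrence q y T)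
    (h : ∀ l, S 0 l = T 0 l) (k l : ℕ) : S k l = T k l := by
  induction k generalizing l with
  | zero => exact h l
  | succ k ih =>
    refine mul_left_cancel₀ (pow_ne_zero (l + 1) hq0) ?_
    linear_combination hS k l - hT k l - ih (l + 1) + y * ih l

end BetaRecurrence

lemma betaRecurrence_pow_mul_qBeta (hq : ¬IsOfFinOrder q) (c y : F) :
    BetaRecurrence q y fun k l => c * y ^ (k + l + 1) * qBeta q k l := fun k l => by
  linear_combination c * y ^ (k + l + 2) * qBeta_succ_add_succ hq k l

/-- The power of `q` multiplying the `j`-th term of `dualSum`. -/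
def dualWeight (q : F) (k j : ℕ) : F := q ^ (-(k : ℤ) * (j : ℤ) - ((k + 1).choose 2 : ℤ))

lemma dualWeight_succ_right (hq0 : q ≠ 0) (k j : ℕ) :
    dualWeight q k (j + 1) = q ^ (j + 1) * dualWeight q (k + 1) j := by
  rw [dualWeight, dualWeight, ← zpow_natCast, ← zpow_add₀ hq0, Nat.choose_succ_succ' (k + 1) 1,
    Nat.choose_one_right]
  congr 1
  push_cast
  ring

lemma dualWeight_zero_left (j : ℕ) : dualWeight q 0 j = 1 := by
  simp [dualWeight]

/-- The first sum of the identity, for an arbitrary sequence `u` in place of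
`A*_n(z) / [n]_q`. -/
def dualSum (q x : F) (u : ℕ → F) (k l : ℕ) : F :=
  (-1) ^ l * ∑ j ∈ range (l + 1),
    qBinom q l j * (x ^ (l - j) * u (k + j + 1) * dualWeight q k j)

lemma betaRecurrence_dualSum (hq0 : q ≠ 0) (hq : ¬IsOfFinOrder q) (x : F) (u : ℕ → F) :
    BetaRecurrence q (-x) (dualSum q x u) := by
  intro k l
  have hstay : ∑ j ∈ range (l + 1),
        qBinom q l j * (x ^ (l + 1 - j) * u (k + j + 1) * dualWeight q k j) =
      x * ∑ j ∈ range (l + 1), qBinom q l j * (x ^ (l - j) * u (k + j + 1) * dualWeight q k j) := by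
    rw [mul_sum]
    refine sum_congr rfl fun j hj => ?_
    rw [Nat.sub_add_comm (mem_range_succ_iff.1 hj), pow_succ]
    ring
  have hshift : ∑ j ∈ range (l + 1), qBinom q l j * (q ^ (l - j) *
        (x ^ (l + 1 - (j + 1)) * u (k + (j + 1) + 1) * dualWeight q k (j + 1))) =
      q ^ (l + 1) * ∑ j ∈ range (l + 1),
        qBinom q l j * (x ^ (l - j) * u (k + 1 + j + 1) * dualWeight q (k + 1) j) := by
    rw [mul_sum]
    refine sum_congr rfl fun j hj => ?_
    have hpow : q ^ (l - j) * q ^ (j + 1) = q ^ (l + 1) := by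
      rw [pow_succ, pow_succ, ← mul_assoc, pow_sub_mul_pow q (mem_range_succ_iff.1 hj)]
    rw [dualWeight_succ_right hq0, Nat.add_sub_add_right, ← add_assoc k, add_right_comm k j, ← hpow]
    ring
  simp only [dualSum]
  rw [sum_qBinom_succ hq, hstay, hshift]
  ring

/-- The power of `q` multiplying the `j`-th term of `primalSum`. -/
def primalWeight (q : F) (k l j : ℕ) : F :=
  q ^ (((j + 1).choose 2 : ℤ) - (k : ℤ) * ((l : ℤ) + j + 1))

lemma primalWeight_succ_left (hq0 : q ≠ 0) (k l j : ℕ) :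
    q ^ (l + j + 1) * primalWeight q (k + 1) l j = primalWeight q k l j := by
  rw [primalWeight, primalWeight, ← zpow_natCast, ← zpow_add₀ hq0]
  congr 1
  push_cast
  ring

lemma primalWeight_succ_left_succ_right (hq0 : q ≠ 0) (k l j : ℕ) :
    q ^ (l + 1) * primalWeight q (k + 1) l (j + 1) = primalWeight q k (l + 1) j := by
  rw [primalWeight, primalWeight, ← zpow_natCast, ← zpow_add₀ hq0, Nat.choose_succ_succ' (j + 1) 1,
    Nat.choose_one_right]
  congr 1
  push_cast
  ring

/-- The second sum of the identity, for an arbitrary sequence `u` in place of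
`A_n([1,-z,-x]) / [n]_q`. -/
def primalSum (q x : F) (u : ℕ → F) (k l : ℕ) : F :=
  (-1) ^ k * ∑ j ∈ range (k + 1),
    qBinom q k j * (x ^ (k - j) * u (l + j + 1) * primalWeight q k l j)

lemma betaRecurrence_primalSum (hq0 : q ≠ 0) (hq : ¬IsOfFinOrder q) (x : F) (u : ℕ → F) :
    BetaRecurrence q (-x) (primalSum q x u) := by
  intro k l
  have hstay : q ^ (l + 1) * ∑ j ∈ range (k + 1), qBinom q k j *
        (q ^ j * (x ^ (k + 1 - j) * u (l + j + 1) * primalWeight q (k + 1) l j)) =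
      x * ∑ j ∈ range (k + 1),
        qBinom q k j * (x ^ (k - j) * u (l + j + 1) * primalWeight q k l j) := by
    rw [mul_sum, mul_sum]
    refine sum_congr rfl fun j hj => ?_
    rw [← primalWeight_succ_left hq0 k, Nat.sub_add_comm (mem_range_succ_iff.1 hj), pow_succ x]
    ring
  have hshift : q ^ (l + 1) * ∑ j ∈ range (k + 1), qBinom q k j *
        (x ^ (k + 1 - (j + 1)) * u (l + (j + 1) + 1) * primalWeight q (k + 1) l (j + 1)) =
      ∑ j ∈ range (k + 1),
        qBinom q k j * (x ^ (k - j) * u (l + 1 + j + 1) * primalWeight q k (l + 1) j) := by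
    rw [mul_sum]
    refine sum_congr rfl fun j _ => ?_
    rw [← primalWeight_succ_left_succ_right hq0, Nat.add_sub_add_right, ← add_assoc l,
      add_right_comm l j]
    ring
  simp only [primalSum]
  rw [sum_qBinom_succ' hq, ← hshift]
  linear_combination (-(-1) ^ k) * hstay

lemma dualSum_zero_left (hq : ¬IsOfFinOrder q) (x : F) (f : ℕ → F) (l : ℕ) :
    dualSum q x (fun n => f n / qInt q n) 0 l =
      -(∑ j ∈ range (l + 1), qBinom q (l + 1) (j + 1) * ((-1) ^ (j + 1) * f (j + 1)) *
        (-x) ^ (l - j)) / qInt q (l + 1) := by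
  rw [dualSum, mul_sum, neg_div, sum_div, ← sum_neg_distrib]
  refine sum_congr rfl fun j hj => ?_
  have hjl := mem_range_succ_iff.1 hj
  rw [dualWeight_zero_left, zero_add, neg_pow x, ← pow_mul_pow_sub (-1 : F) hjl]
  linear_combination
    -((-1) ^ j * (-1) ^ (l - j) * x ^ (l - j) * f (j + 1)) * qBinom_succ_succ_div_qInt hq hjl

lemma primalSum_zero_left (x : F) (u : ℕ → F) (l : ℕ) :
    primalSum q x u 0 l = u (l + 1) := by
  simp [primalSum, primalWeight, qBinom_zero_zero]

lemma dualSum_add_primalSum_zero_left (hq : ¬IsOfFinOrder q) (x : F) (f : ℕ → F) (l : ℕ) :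
    dualSum q x (fun n => f n / qInt q n) 0 l +
        primalSum q x (fun n => qConv q (fun i => (-1) ^ i * f i) ((-x) ^ ·) n / qInt q n) 0 l =
      f 0 * (-x) ^ (l + 1) / qInt q (l + 1) := by
  rw [dualSum_zero_left hq, primalSum_zero_left, qConv, sum_range_succ' _ (l + 1),
    qBinom_zero_right hq]
  simp only [Nat.add_sub_add_right, Nat.sub_zero, pow_zero, one_mul]
  rw [add_div, neg_div, neg_add_cancel_left]

theorem dualSum_add_primalSum (hq0 : q ≠ 0) (hq : ¬IsOfFinOrder q) (x : F) (f : ℕ → F)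
    (k l : ℕ) :
    dualSum q x (fun n => f n / qInt q n) k l +
        primalSum q x (fun n => qConv q (fun i => (-1) ^ i * f i) ((-x) ^ ·) n / qInt q n) k l =
      f 0 * (-x) ^ (k + l + 1) * qBeta q k l := by
  refine ((betaRecurrence_dualSum hq0 hq x _).add (betaRecurrence_primalSum hq0 hq x _)).eq_of_zero
    hq0 (betaRecurrence_pow_mul_qBeta hq (f 0) (-x)) (fun l => ?_) k l
  rw [dualSum_add_primalSum_zero_left hq, qBeta_zero_left hq, zero_add, div_eq_mul_inv]

end QCalculus

theorem stmt3 {F : Type*} [Field F] (q : F) (hq0 : q ≠ 0)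
    (hq : ∀ m : ℕ, 0 < m → q ^ m ≠ 1) (a : ℕ → F) (k l : ℕ) (x z : F) :
    (-1 : F) ^ l * ∑ j ∈ Finset.range (l + 1), qBinom q l j * x ^ (l - j) *
        (AstarPoly q a (k + j + 1) z / qInt q (k + j + 1)) *
        q ^ (-(k : ℤ) * (j : ℤ) - ((k + 1).choose 2 : ℤ)) +
      (-1 : F) ^ k * ∑ j ∈ Finset.range (k + 1), qBinom q k j * x ^ (k - j) *
        (ApolyTri q a (l + j + 1) z x / qInt q (l + j + 1)) *
        q ^ (((j + 1).choose 2 : ℤ) - (k : ℤ) * ((l : ℤ) + j + 1)) =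
    a 0 * (-x) ^ (k + l + 1) / (qInt q (k + l + 1) * qBinom q (k + l) k) := by
  have hq' : ¬IsOfFinOrder q := by
    simpa only [isOfFinOrder_iff_pow_eq_one, not_exists, not_and] using hq
  have hsum := dualSum_add_primalSum hq0 hq' x (AstarPoly q a · z) k l
  rw [← ApolyTri_eq_qConv_AstarPoly hq', AstarPoly_zero, qBeta_eq_inv hq'] at hsum
  simpa only [dualSum, primalSum, dualWeight, primalWeight, mul_assoc, div_eq_mul_inv] using hsum
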